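/- For all real numbers $D_h$ and $D_v$, $\frac{1}{2\pi^2} \int_0^{\pi} \int_0^{2\pi} \cos\big(2 D_h \sin\theta \sin\phi + 2 D_v \cos\theta\big)\, d\phi\, d\theta = J_0\!\Big(\sqrt{D_h^2 + D_v^2} + D_v\Big)\, J_0\!\Big(\sqrt{D_h^2 + D_v^2} - D_v\Big)$. -/

import Mathlib

/-- The Bessel function of the first kind of order zero, defined by its
integral representation `J₀(x) = (1/2π) ∫₀^{2π} cos(x sin t) dt`. -/
noncomputable def besselJ0 (x : ℝ) : ℝ :=
  (1 / (2 * Real.pi)) * ∫ t in (0 : ℝ)..(2 * Real.pi), Real.cos (x * Real.sin t)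

/-!
Expanding `J₀(x) J₀(y)` as a double integral of `cos (x sin s - y sin t)` and substituting
`t = w + s` turns the inner phase into a sinusoid in `s` whose amplitude is given by the law of
cosines, whence Neumann's formula
`J₀(x) J₀(y) = (1/2π) ∫₀^{2π} J₀(√(x² + y² - 2xy cos w)) dw`.
For `x, y = √(Dh² + Dv²) ± Dv` and `w = 2φ` the argument of `J₀` is
`√((2 Dh sin φ)² + (2 Dv)²)`, which is the amplitude in `θ` of the phase
`2 Dh sin θ sin φ + 2 Dv cos θ`. The latter changes sign under `θ ↦ θ + π`, so its cosine may be
averaged over `[0, π]` instead of a full period.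
-/

section IntervalIntegral

open Function MeasureTheory

variable {E : Type*} [NormedAddCommGroup E] [NormedSpace ℝ E]

theorem integral_comp_add_right_of_periodic {f : ℝ → E} {T : ℝ} (hf : Periodic f T) (c : ℝ) :
    ∫ t in (0 : ℝ)..T, f (t + c) = ∫ t in (0 : ℝ)..T, f t := by
  simpa [add_comm] using hf.intervalIntegral_add_eq c 0

theorem integral_comp_int_mul_of_periodic {f : ℝ → E} {T : ℝ} (hf : Periodic f T)
    (h_int : ∀ a b, IntervalIntegrable f volume a b) {n : ℤ} (hn : n ≠ 0) :
    ∫ t in (0 : ℝ)..T, f (n * t) = ∫ t in (0 : ℝ)..T, f t := by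
  have hn' : (n : ℝ) ≠ 0 := Int.cast_ne_zero.mpr hn
  have periods : ∫ t in (0 : ℝ)..n * T, f t = (n : ℝ) • ∫ t in (0 : ℝ)..T, f t := by
    simpa [Int.cast_smul_eq_zsmul] using hf.intervalIntegral_add_zsmul_eq n 0 h_int
  rw [intervalIntegral.integral_comp_mul_left _ hn', mul_zero, periods, inv_smul_smul₀ hn']

theorem intervalIntegral_swap_of_continuous {f : ℝ → ℝ → E} (hf : Continuous (uncurry f))
    (a b c d : ℝ) :
    ∫ x in a..b, ∫ y in c..d, f x y = ∫ y in c..d, ∫ x in a..b, f x y :=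
  intervalIntegral_intervalIntegral_swap <|
    (hf.continuousOn.integrableOn_compact (isCompact_uIcc.prod isCompact_uIcc)).mono_set
      (Set.prod_mono Set.uIoc_subset_uIcc Set.uIoc_subset_uIcc)

end IntervalIntegral

section BesselJ0

open Real

theorem mul_sin_add_mul_cos_eq_sqrt_mul_sin (a b t : ℝ) :
    a * sin t + b * cos t = √(a ^ 2 + b ^ 2) * sin (t + Complex.arg ⟨a, b⟩) := by
  have ha := Complex.norm_mul_cos_arg ⟨a, b⟩
  have hb := Complex.norm_mul_sin_arg ⟨a, b⟩
  rw [Complex.norm_eq_sqrt_sq_add_sq] at ha hb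
  rw [sin_add]
  linear_combination -sin t * ha - cos t * hb

theorem continuous_besselJ0 : Continuous besselJ0 := by
  unfold besselJ0
  fun_prop

theorem integral_cos_mul_sin (x : ℝ) :
    ∫ t in (0 : ℝ)..2 * π, cos (x * sin t) = 2 * π * besselJ0 x := by
  unfold besselJ0
  field_simp

theorem integral_sin_mul_sin (x : ℝ) : ∫ t in (0 : ℝ)..2 * π, sin (x * sin t) = 0 := by
  have periodic : Function.Periodic (fun t ↦ sin (x * sin t)) (2 * π) := fun t ↦ by simp
  have shift := integral_comp_add_right_of_periodic periodic π
  simp only [sin_add_pi, mul_neg, sin_neg, intervalIntegral.integral_neg] at shift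
  linarith

theorem integral_cos_mul_sin_add_mul_cos (a b : ℝ) :
    ∫ t in (0 : ℝ)..2 * π, cos (a * sin t + b * cos t) = 2 * π * besselJ0 √(a ^ 2 + b ^ 2) := by
  have periodic : Function.Periodic (fun t ↦ cos (√(a ^ 2 + b ^ 2) * sin t)) (2 * π) :=
    fun t ↦ by simp
  simp_rw [mul_sin_add_mul_cos_eq_sqrt_mul_sin a b]
  rw [integral_comp_add_right_of_periodic periodic, integral_cos_mul_sin]

theorem integral_zero_pi_cos_mul_sin_add_mul_cos (a b : ℝ) :
    ∫ t in (0 : ℝ)..π, cos (a * sin t + b * cos t) = π * besselJ0 √(a ^ 2 + b ^ 2) := by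
  have periodic : Function.Periodic (fun t ↦ cos (a * sin t + b * cos t)) π := fun t ↦ by
    simp only [sin_add_pi, cos_add_pi, mul_neg, ← neg_add, cos_neg]
  have two_periods := periodic.intervalIntegral_add_zsmul_eq 2 0
    fun _ _ ↦ Continuous.intervalIntegrable (by fun_prop) _ _
  simp only [zero_add, zsmul_eq_mul, Int.cast_ofNat, integral_cos_mul_sin_add_mul_cos]
    at two_periods
  linarith

theorem integral_cos_mul_sin_mul_integral_cos_mul_sin (x y : ℝ) :
    (∫ s in (0 : ℝ)..2 * π, cos (x * sin s)) * ∫ t in (0 : ℝ)..2 * π, cos (y * sin t) =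
      ∫ s in (0 : ℝ)..2 * π, ∫ t in (0 : ℝ)..2 * π, cos (x * sin s - y * sin t) := by
  have inner (s : ℝ) : ∫ t in (0 : ℝ)..2 * π, cos (x * sin s - y * sin t) =
      cos (x * sin s) * ∫ t in (0 : ℝ)..2 * π, cos (y * sin t) := by
    simp_rw [cos_sub]
    rw [intervalIntegral.integral_add (Continuous.intervalIntegrable (by fun_prop) _ _)
        (Continuous.intervalIntegrable (by fun_prop) _ _),
      intervalIntegral.integral_const_mul, intervalIntegral.integral_const_mul,
      integral_sin_mul_sin, mul_zero, add_zero]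
  simp_rw [inner, intervalIntegral.integral_mul_const]

theorem integral_cos_mul_sin_sub_mul_sin_add (x y w : ℝ) :
    ∫ s in (0 : ℝ)..2 * π, cos (x * sin s - y * sin (w + s)) =
      2 * π * besselJ0 √(x ^ 2 + y ^ 2 - 2 * x * y * cos w) := by
  have phase (s : ℝ) : x * sin s - y * sin (w + s) =
      (x - y * cos w) * sin s + (-(y * sin w)) * cos s := by
    rw [sin_add]
    ring
  have amplitude : (x - y * cos w) ^ 2 + (-(y * sin w)) ^ 2 =
      x ^ 2 + y ^ 2 - 2 * x * y * cos w := by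
    linear_combination y ^ 2 * sin_sq_add_cos_sq w
  simp_rw [phase]
  rw [integral_cos_mul_sin_add_mul_cos, amplitude]

theorem besselJ0_mul_besselJ0 (x y : ℝ) :
    besselJ0 x * besselJ0 y =
      1 / (2 * π) * ∫ w in (0 : ℝ)..2 * π, besselJ0 √(x ^ 2 + y ^ 2 - 2 * x * y * cos w) := by
  have shift (s : ℝ) : ∫ t in (0 : ℝ)..2 * π, cos (x * sin s - y * sin t) =
      ∫ w in (0 : ℝ)..2 * π, cos (x * sin s - y * sin (w + s)) :=
    (integral_comp_add_right_of_periodic (f := fun t ↦ cos (x * sin s - y * sin t))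
      (fun t ↦ by simp) s).symm
  have product := calc
    (2 * π * besselJ0 x) * (2 * π * besselJ0 y)
      = ∫ s in (0 : ℝ)..2 * π, ∫ t in (0 : ℝ)..2 * π, cos (x * sin s - y * sin t) := by
        rw [← integral_cos_mul_sin, ← integral_cos_mul_sin,
          integral_cos_mul_sin_mul_integral_cos_mul_sin]
    _ = ∫ w in (0 : ℝ)..2 * π, ∫ s in (0 : ℝ)..2 * π, cos (x * sin s - y * sin (w + s)) := by
        simp_rw [shift]
        exact intervalIntegral_swap_of_continuous (by fun_prop) _ _ _ _
    _ = 2 * π * ∫ w in (0 : ℝ)..2 * π, besselJ0 √(x ^ 2 + y ^ 2 - 2 * x * y * cos w) := by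
        simp_rw [integral_cos_mul_sin_sub_mul_sin_add, intervalIntegral.integral_const_mul]
  field_simp at product ⊢
  linarith

theorem besselJ0_mul_besselJ0_eq_integral_cos_two_mul (x y : ℝ) :
    besselJ0 x * besselJ0 y =
      1 / (2 * π) *
        ∫ φ in (0 : ℝ)..2 * π, besselJ0 √(x ^ 2 + y ^ 2 - 2 * x * y * cos (2 * φ)) := by
  let f (w : ℝ) : ℝ := besselJ0 √(x ^ 2 + y ^ 2 - 2 * x * y * cos w)
  have periodic : Function.Periodic f (2 * π) := fun w ↦ by simp only [f, cos_add_two_pi]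
  have continuous : Continuous f := continuous_besselJ0.comp (by fun_prop)
  have double := integral_comp_int_mul_of_periodic periodic
    (fun _ _ ↦ continuous.intervalIntegrable _ _) two_ne_zero
  rw [besselJ0_mul_besselJ0, ← double, Int.cast_ofNat]

theorem sq_add_sq_sub_two_mul_mul_cos_two_mul_eq (h v φ : ℝ) :
    (√(h ^ 2 + v ^ 2) + v) ^ 2 + (√(h ^ 2 + v ^ 2) - v) ^ 2 -
        2 * (√(h ^ 2 + v ^ 2) + v) * (√(h ^ 2 + v ^ 2) - v) * cos (2 * φ) =
      (2 * h * sin φ) ^ 2 + (2 * v) ^ 2 := by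
  have hr : √(h ^ 2 + v ^ 2) ^ 2 = h ^ 2 + v ^ 2 := sq_sqrt (by positivity)
  rw [cos_two_mul, cos_sq']
  linear_combination 4 * sin φ ^ 2 * hr

end BesselJ0

/-- Eq. (73) of the paper (closed form of `E{cos b_p}`), with departure
elevation uniform on `[0, π]` and departure azimuth uniform on `[0, 2π]`,
independently. -/
theorem expectation_cos_bp_closed_form (Dh Dv : ℝ) :
    (1 / (2 * Real.pi ^ 2)) *
        ∫ θ in (0 : ℝ)..Real.pi, ∫ φ in (0 : ℝ)..(2 * Real.pi),
          Real.cos (2 * Dh * Real.sin θ * Real.sin φ + 2 * Dv * Real.cos θ) =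
      besselJ0 (Real.sqrt (Dh ^ 2 + Dv ^ 2) + Dv) *
        besselJ0 (Real.sqrt (Dh ^ 2 + Dv ^ 2) - Dv) := by
  rw [intervalIntegral_swap_of_continuous (by fun_prop),
    besselJ0_mul_besselJ0_eq_integral_cos_two_mul]
  simp_rw [mul_right_comm (2 * Dh), integral_zero_pi_cos_mul_sin_add_mul_cos,
    sq_add_sq_sub_two_mul_mul_cos_two_mul_eq, intervalIntegral.integral_const_mul]
  field_simp
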